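/- The function β is strictly increasing in each variable on the positive quadrant: for all real y > 0 and 0 < x₁ < x₂ one has β(x₁,y) < β(x₂,y), and for all real x > 0 and 0 < y₁ < y₂ one has β(x,y₁) < β(x,y₂). -/

import Mathlib

/-- The auxiliary function `β(x,y) = d₂(x,y)/d₀(x,y)` of the BDF3 analysis. -/
noncomputable def betaF (x y : ℝ) : ℝ :=
  x*(x + 1)^2*y^2 / ((y + 1)*(3*x^2*y + 4*x*y + 2*x + y + 1))

section

variable {x y : ℝ}

lemma betaF_pos (hx : 0 < x) (hy : 0 < y) : 0 < betaF x y := by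
  unfold betaF
  positivity

/-- On the positive quadrant the right-hand side is built by sums and products from the positive
decreasing functions `x⁻¹`, `(x + 1)⁻¹` and `y⁻¹`, so the monotonicity of `β` can be read off. The
second factor comes from `3x²y + 4xy + 2x + y + 1 = y(3x + 1)(x + 1) + (2x + 1)` and the partial
fractions in `x` of both summands after division by `x(x + 1)²y`. -/
lemma inv_betaF (hx : x ≠ 0) (hx1 : x + 1 ≠ 0) (hy : y ≠ 0) :
    (betaF x y)⁻¹ =
      (1 + y⁻¹) * (x⁻¹ + 2 * (x + 1)⁻¹ + y⁻¹ * ((x + 1)⁻¹ * (x⁻¹ + (x + 1)⁻¹))) := by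
  rw [betaF, inv_div]
  field_simp
  ring

lemma strictMonoOn_betaF_left (hy : 0 < y) : StrictMonoOn (fun x ↦ betaF x y) (Set.Ioi 0) := by
  intro x₁ (hx₁ : 0 < x₁) x₂ (hx₂ : 0 < x₂) hlt
  rw [← inv_lt_inv₀ (betaF_pos hx₂ hy) (betaF_pos hx₁ hy),
    inv_betaF hx₂.ne' (by positivity) hy.ne', inv_betaF hx₁.ne' (by positivity) hy.ne']
  gcongr

lemma strictMonoOn_betaF_right (hx : 0 < x) : StrictMonoOn (betaF x) (Set.Ioi 0) := by
  intro y₁ (hy₁ : 0 < y₁) y₂ (hy₂ : 0 < y₂) hlt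
  rw [← inv_lt_inv₀ (betaF_pos hx hy₂) (betaF_pos hx hy₁),
    inv_betaF hx.ne' (by positivity) hy₂.ne', inv_betaF hx.ne' (by positivity) hy₁.ne']
  gcongr

end

/-- The function `β` is strictly increasing in each variable on the positive quadrant. -/
theorem beta_strict_mono :
    (∀ y x₁ x₂ : ℝ, 0 < y → 0 < x₁ → x₁ < x₂ → betaF x₁ y < betaF x₂ y) ∧
    (∀ x y₁ y₂ : ℝ, 0 < x → 0 < y₁ → y₁ < y₂ → betaF x y₁ < betaF x y₂) :=
  ⟨fun _ _ _ hy hx₁ hlt ↦ strictMonoOn_betaF_left hy hx₁ (hx₁.trans hlt) hlt,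
    fun _ _ _ hx hy₁ hlt ↦ strictMonoOn_betaF_right hx hy₁ (hy₁.trans hlt) hlt⟩
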